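/- arXiv:1506.01652 — 10 statements merged into one kernel-verified Lean document; each statement's English description precedes it below -/
import Mathlib

section
/- Let G=(V,E) be an interval graph with an interval representation, and let k be the minimum size of a proper interval deletion set of G. Then there exists a proper interval deletion set D of G with k ≤ |D| ≤ 4k; moreover D can be chosen as the union of |D|/4 pairwise vertex-disjoint quadruples of vertices, each inducing a claw K_{1,3} in G. -/
/-- The set `{c, a, b, d}` induces a claw `K_{1,3}` in `G` with center `c`
and leaves `a, b, d`. -/
def InducedClaw {V : Type*} (G : SimpleGraph V) (c a b d : V) : Prop :=
  G.Adj c a ∧ G.Adj c b ∧ G.Adj c d ∧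
  ¬ G.Adj a b ∧ ¬ G.Adj a d ∧ ¬ G.Adj b d ∧ a ≠ b ∧ a ≠ d ∧ b ≠ d

/-- `D` is a proper interval deletion set of `G`: `G ∖ D` contains no induced claw. -/
def ProperIntervalDeletionSet {V : Type*} (G : SimpleGraph V) (D : Set V) : Prop :=
  ¬ ∃ c a b d : V, c ∉ D ∧ a ∉ D ∧ b ∉ D ∧ d ∉ D ∧ InducedClaw G c a b d

theorem stmt0 {V : Type*} [Fintype V] [DecidableEq V]
    (G : SimpleGraph V) (l r : V → ℝ)
    (hlr : ∀ v : V, l v < r v)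
    (hinjl : Function.Injective l) (hinjr : Function.Injective r)
    (hlrne : ∀ u v : V, l u ≠ r v)
    (hadj : ∀ u v : V, G.Adj u v ↔ u ≠ v ∧ l u ≤ r v ∧ l v ≤ r u)
    (k : ℕ)
    (hk : IsLeast {n : ℕ | ∃ D : Finset V, ProperIntervalDeletionSet G ↑D ∧ D.card = n} k) :
    ∃ D : Finset V, ProperIntervalDeletionSet G ↑D ∧ k ≤ D.card ∧ D.card ≤ 4 * k ∧
      ∃ (m : ℕ) (Q : Fin m → Finset V),
        D.card = 4 * m ∧
        (∀ i, (Q i).card = 4) ∧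
        (∀ i j, i ≠ j → Disjoint (Q i) (Q j)) ∧
        (∀ i, ∃ c a b d : V, Q i = {c, a, b, d} ∧ InducedClaw G c a b d) ∧
        D = Finset.univ.biUnion Q := by
  classical
  let P : Finset (Finset V) → Prop := fun F =>
    (∀ q ∈ F, ∃ c a b d : V, q = {c, a, b, d} ∧ InducedClaw G c a b d) ∧
    (∀ p ∈ F, ∀ q ∈ F, p ≠ q → Disjoint p q)
  obtain ⟨F, hF, hmax⟩ := Finset.exists_max_image
    (Finset.univ.filter P) Finset.card ⟨∅, by simp [P]⟩
  obtain ⟨hclaw, hdisj⟩ : P F := (Finset.mem_filter.1 hF).2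
  have hcard : ∀ q ∈ F, q.card = 4 := by
    intro q hq
    obtain ⟨c, a, b, d, rfl, h1, h2, h3, -, -, -, h4, h5, h6⟩ := hclaw q hq
    have := h1.ne
    have := h2.ne
    have := h3.ne
    rw [Finset.card_insert_of_notMem (by simp [*]), Finset.card_insert_of_notMem (by simp [*]),
      Finset.card_insert_of_notMem (by simp [*]), Finset.card_singleton]
  have hpids : ProperIntervalDeletionSet G (↑(F.biUnion id) : Set V) := by
    rintro ⟨c, a, b, d, hc, ha, hb, hd, h⟩
    have hout : ∀ x ∈ ({c, a, b, d} : Finset V), ∀ q ∈ F, x ∉ q := by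
      intro x hx q hq hxq
      have hxD : x ∈ (↑(F.biUnion id) : Set V) :=
        Finset.mem_coe.2 (Finset.mem_biUnion.2 ⟨q, hq, hxq⟩)
      simp only [Finset.mem_insert, Finset.mem_singleton] at hx
      rcases hx with rfl | rfl | rfl | rfl <;> contradiction
    have hdj : ∀ q ∈ F, Disjoint ({c, a, b, d} : Finset V) q := fun q hq =>
      Finset.disjoint_left.2 fun x hx => hout x hx q hq
    have hnot : ({c, a, b, d} : Finset V) ∉ F := fun hm => hout c (by simp) _ hm (by simp)
    have hP : P (insert {c, a, b, d} F) := by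
      refine ⟨?_, ?_⟩
      · intro q hq
        rcases Finset.mem_insert.1 hq with rfl | hq
        · exact ⟨c, a, b, d, rfl, h⟩
        · exact hclaw q hq
      · intro p hp q hq hpq
        rcases Finset.mem_insert.1 hp with rfl | hp <;>
          rcases Finset.mem_insert.1 hq with rfl | hq
        · exact absurd rfl hpq
        · exact hdj q hq
        · exact (hdj p hp).symm
        · exact hdisj p hp q hq hpq
    have := hmax _ (Finset.mem_filter.2 ⟨Finset.mem_univ _, hP⟩)
    rw [Finset.card_insert_of_notMem hnot] at this
    omega
  have hDcard : (F.biUnion id).card = 4 * F.card := by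
    rw [Finset.card_biUnion (t := id) (fun p hp q hq hpq => hdisj p hp q hq hpq),
      Finset.sum_congr rfl (f := fun u => (id u).card) (g := fun _ => 4) (fun q hq => hcard q hq)]
    simp [mul_comm]
  obtain ⟨⟨D', hD', hD'k⟩, hleast⟩ := hk
  have hle : F.card ≤ k := by
    have hit : ∀ q ∈ F, ∃ x ∈ D', x ∈ q := by
      intro q hq
      by_contra! hcon
      obtain ⟨c, a, b, d, rfl, h⟩ := hclaw q hq
      exact hD' ⟨c, a, b, d, fun hx => hcon c hx (by simp), fun hx => hcon a hx (by simp),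
        fun hx => hcon b hx (by simp), fun hx => hcon d hx (by simp), h⟩
    choose f hf1 hf2 using hit
    rw [← hD'k]
    have hinj : Function.Injective
        (fun q : F => (⟨f q.1 q.2, hf1 q.1 q.2⟩ : D')) := by
      rintro ⟨p, hp⟩ ⟨q, hq⟩ hpq
      have hpq' : f p hp = f q hq := congrArg Subtype.val hpq
      by_contra hne
      have hne' : p ≠ q := fun h => hne (Subtype.ext h)
      exact Finset.disjoint_left.1 (hdisj p hp q hq hne') (hf2 p hp) (hpq' ▸ hf2 q hq)
    simpa using Fintype.card_le_of_injective _ hinj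
  refine ⟨F.biUnion id, hpids, hleast ⟨_, hpids, rfl⟩, by omega, F.card,
    fun i => (F.equivFin.symm i : Finset V), hDcard, fun i => hcard _ (F.equivFin.symm i).2,
    fun i j hij => hdisj _ (F.equivFin.symm i).2 _ (F.equivFin.symm j).2 ?_,
    fun i => hclaw _ (F.equivFin.symm i).2, ?_⟩
  · intro h
    exact hij (F.equivFin.symm.injective (Subtype.ext h))
  · ext x
    simp only [Finset.mem_biUnion, id, Finset.mem_univ, true_and]
    constructor
    · rintro ⟨q, hq, hx⟩
      exact ⟨F.equivFin ⟨q, hq⟩, by simpa using hx⟩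
    · rintro ⟨i, hx⟩
      exact ⟨_, (F.equivFin.symm i).2, hx⟩
end

section
/- Every interval graph G with an interval representation I admits a semi-proper interval representation, i.e., an interval representation I′ of the same graph G such that for any two vertices u,v, if I′_v ⊆ I′_u then there exist vertices a,b such that {u,v,a,b} induces a claw K_{1,3} in G. -/
/-- The set `s` induces a claw `K_{1,3}` in `G`. -/
def InducesClawOn {V : Type*} (G : SimpleGraph V) (s : Set V) : Prop :=
  ∃ c a b d : V, s = {c, a, b, d} ∧ InducedClaw G c a b d

theorem lex_aux {M x y a b : ℕ} (_ha : a < M) (hb : b < M) (h : M * x + a ≤ M * y + b) :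
    x < y ∨ (x = y ∧ a ≤ b) := by
  rcases lt_trichotomy x y with h1 | h1 | h1
  · exact Or.inl h1
  · subst h1
    exact Or.inr ⟨rfl, by omega⟩
  · exfalso
    have : M * (y + 1) ≤ M * x := Nat.mul_le_mul_left _ h1
    rw [Nat.mul_add] at this
    omega

theorem stmt1 {V : Type*} [Fintype V]
    (G : SimpleGraph V) (l r : V → ℝ)
    (hlr : ∀ v : V, l v < r v)
    (hinjl : Function.Injective l) (hinjr : Function.Injective r)
    (hlrne : ∀ u v : V, l u ≠ r v)
    (hadj : ∀ u v : V, G.Adj u v ↔ u ≠ v ∧ l u ≤ r v ∧ l v ≤ r u) :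
    ∃ l' r' : V → ℝ,
      (∀ v : V, l' v < r' v) ∧
      Function.Injective l' ∧ Function.Injective r' ∧
      (∀ u v : V, l' u ≠ r' v) ∧
      (∀ u v : V, G.Adj u v ↔ u ≠ v ∧ l' u ≤ r' v ∧ l' v ≤ r' u) ∧
      (∀ u v : V, u ≠ v →
        Set.Icc (l' v) (r' v) ⊆ Set.Icc (l' u) (r' u) →
        ∃ a b : V, InducesClawOn G {u, v, a, b}) := by
  classical
  -- number of predecessors
  obtain ⟨p, hp⟩ : ∃ p : V → ℕ, p = fun v => (Finset.univ.filter (fun x => r x < l v)).card :=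
    ⟨_, rfl⟩
  obtain ⟨R, hR⟩ : ∃ R : V → ℕ, R = fun v => (Finset.univ.filter (fun x => l x ≤ r v)).sup p :=
    ⟨_, rfl⟩
  obtain ⟨K, hK⟩ : ∃ K : ℕ, K = Fintype.card V + 1 := ⟨_, rfl⟩
  obtain ⟨i, hi, hiK⟩ : ∃ i : V → ℕ, Function.Injective i ∧ ∀ v, i v < K := by
    refine ⟨fun v => (Fintype.equivFin V v : ℕ), ?_, ?_⟩
    · intro a b hab
      exact (Fintype.equivFin V).injective (Fin.ext hab)
    · intro v
      have := (Fintype.equivFin V v).2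
      simp only; omega
  have hpK : ∀ v, p v < K := by
    intro v
    have : p v ≤ Fintype.card V := by rw [hp]; exact Finset.card_le_univ _
    omega
  have hRK : ∀ v, R v < K := by
    intro v
    rw [hR]
    refine (Finset.sup_lt_iff (by simp [hK])).2 fun x _ => hpK x
  have hpR : ∀ u v, l u ≤ r v ↔ p u ≤ R v := by
    intro u v
    constructor
    · intro h
      rw [hR]
      exact Finset.le_sup (f := p) (by simpa using h)
    · intro h
      by_contra hlt
      push Not at hlt
      have : R v < p u := by
        rw [hR]
        have key : ∀ x, l x ≤ r v → p x < p u := by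
          intro x hx
          rw [hp]
          apply Finset.card_lt_card
          rw [Finset.ssubset_iff_of_subset]
          · exact ⟨v, by simpa using hlt, by simpa using hx⟩
          · intro y
            simp only [Finset.mem_filter, Finset.mem_univ, true_and]
            intro hy; linarith
        refine (Finset.sup_lt_iff ?_).2 fun x hx => key x (by simpa using hx)
        exact lt_of_le_of_lt (Nat.zero_le _) (key v (hlr v).le)
      omega
  have hpw : ∀ u v, p u < p v → ∃ a, r a < l v ∧ l u ≤ r a := by
    intro u v h
    by_contra hc
    push Not at hc
    have : p v ≤ p u := by
      rw [hp]
      apply Finset.card_le_card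
      intro y
      simp only [Finset.mem_filter, Finset.mem_univ, true_and]
      exact hc y
    omega
  have hRw : ∀ u v, R v < R u → ∃ b, r v < l b ∧ l b ≤ r u := by
    intro u v h
    by_contra hc
    push Not at hc
    have : R u ≤ R v := by
      rw [hR]
      apply Finset.sup_mono
      intro y
      simp only [Finset.mem_filter, Finset.mem_univ, true_and]
      intro hy
      by_contra hh
      push Not at hh
      exact absurd hy (not_le.2 (hc y hh))
    omega
  have hT : ∀ x a : ℕ, x < K → a < K → K * x + a < K * K := by
    intro x a hx ha
    have : K * (x + 1) ≤ K * K := Nat.mul_le_mul_left _ hx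
    rw [Nat.mul_add] at this
    omega
  obtain ⟨M, hM⟩ : ∃ M, M = K * K := ⟨_, rfl⟩
  obtain ⟨L, hL⟩ : ∃ L : V → ℕ, L = fun v => (2 * M) * p v + (K * R v + i v) := ⟨_, rfl⟩
  obtain ⟨Q, hQ⟩ : ∃ Q : V → ℕ, Q = fun v => (2 * M) * R v + (M + (K * p v + i v)) := ⟨_, rfl⟩
  have hT1 : ∀ v, K * R v + i v < M := fun v => hM ▸ hT _ _ (hRK v) (hiK v)
  have hT2 : ∀ v, K * p v + i v < M := fun v => hM ▸ hT _ _ (hpK v) (hiK v)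
  have hLlex : ∀ u v, L u ≤ L v → p u < p v ∨ (p u = p v ∧ (R u < R v ∨ (R u = R v ∧ i u ≤ i v))) := by
    intro u v h
    rw [hL] at h
    have h1 := hT1 u
    have h2 := hT1 v
    rcases lex_aux (by omega) (by omega) h with h3 | ⟨h3, h4⟩
    · exact Or.inl h3
    · exact Or.inr ⟨h3, lex_aux (hiK u) (hiK v) h4⟩
  have hQlex : ∀ u v, Q u ≤ Q v → R u < R v ∨ (R u = R v ∧ (p u < p v ∨ (p u = p v ∧ i u ≤ i v))) := by
    intro u v h
    rw [hQ] at h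
    have h1 := hT2 u
    have h2 := hT2 v
    rcases lex_aux (by omega) (by omega) h with h3 | ⟨h3, h4⟩
    · exact Or.inl h3
    · exact Or.inr ⟨h3, lex_aux (hiK u) (hiK v) (by omega)⟩
  have hlt : ∀ u v, p u ≤ R v → L u < Q v := by
    intro u v h
    rw [hL, hQ]
    have h1 := hT1 u
    have : (2 * M) * p u ≤ (2 * M) * R v := Nat.mul_le_mul_left _ h
    simp only; omega
  have hgt : ∀ u v, R v < p u → Q v < L u := by
    intro u v h
    rw [hL, hQ]
    have h1 := hT2 v
    have : (2 * M) * (R v + 1) ≤ (2 * M) * p u := Nat.mul_le_mul_left _ h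
    rw [Nat.mul_add] at this
    simp only; omega
  have hLQ : ∀ u v, l u ≤ r v ↔ L u ≤ Q v := by
    intro u v
    rw [hpR]
    constructor
    · intro h; exact (hlt u v h).le
    · intro h
      by_contra hc
      have := hgt u v (by omega)
      omega
  refine ⟨fun v => (L v : ℝ), fun v => (Q v : ℝ), ?_, ?_, ?_, ?_, ?_, ?_⟩
  · intro v
    exact Nat.cast_lt.2 <| hlt v v ((hpR v v).1 (hlr v).le)
  · intro u v h
    have h : L u = L v := Nat.cast_injective (R := ℝ) h
    have h1 := hLlex u v h.le
    have h2 := hLlex v u h.ge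
    exact hi (by omega)
  · intro u v h
    have h : Q u = Q v := Nat.cast_injective (R := ℝ) h
    have h1 := hQlex u v h.le
    have h2 := hQlex v u h.ge
    exact hi (by omega)
  · intro u v h
    have h : L u = Q v := Nat.cast_injective (R := ℝ) h
    rcases le_or_gt (p u) (R v) with h1 | h1
    · have := hlt u v h1; omega
    · have := hgt u v h1; omega
  · intro u v
    rw [hadj, hLQ, hLQ]
    simp only [Nat.cast_le]
  · intro u v huv hsub
    have hv : (L v : ℝ) ≤ Q v := by exact_mod_cast (hlt v v ((hpR v v).1 (hlr v).le)).le
    have h1 := hLlex u v (Nat.cast_le (α := ℝ).1 (hsub (Set.left_mem_Icc.2 hv)).1)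
    have h2 := hQlex v u (Nat.cast_le (α := ℝ).1 (hsub (Set.right_mem_Icc.2 hv)).2)
    have hne : i u ≠ i v := fun h => huv (hi h)
    obtain ⟨a, ha1, ha2⟩ := hpw u v (by omega)
    obtain ⟨b, hb1, hb2⟩ := hRw u v (by omega)
    have lu := hlr u
    have lv := hlr v
    have la := hlr a
    have lb := hlr b
    have hva : v ≠ a := by rintro rfl; linarith
    have hvb : v ≠ b := by rintro rfl; linarith
    have hab : a ≠ b := by rintro rfl; linarith
    by_cases hua : u = a
    · subst hua
      exfalso; linarith
    by_cases hub : u = b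
    · subst hub
      exfalso; linarith
    refine ⟨a, b, u, v, a, b, rfl, ?_⟩
    refine ⟨(hadj _ _).2 ⟨huv, by linarith, by linarith⟩,
      (hadj _ _).2 ⟨hua, by linarith, by linarith⟩,
      (hadj _ _).2 ⟨hub, by linarith, by linarith⟩, ?_, ?_, ?_, hva, hvb, hab⟩
    · rw [hadj]; rintro ⟨-, h, h'⟩; linarith
    · rw [hadj]; rintro ⟨-, h, h'⟩; linarith
    · rw [hadj]; rintro ⟨-, h, h'⟩; linarith
end

section
/- Let G be an interval graph with interval representation I and right-endpoint ordering σ, and let P be a normal path of G. If u,w ∈ V(P) satisfy u <_P w and w <_σ u, then w and u are adjacent in G. -/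
/-- `p` is a normal path of the interval graph `G` with right-endpoint function `r`:
it is a path (consecutive vertices adjacent, no repeated vertex), its first vertex is
the leftmost vertex of the path in the right-endpoint ordering, and each vertex `p[i+1]`
is the leftmost (in the right-endpoint ordering) vertex among the later path vertices
that are adjacent to `p[i]`. -/
def IsNormalPath {V : Type*} (G : SimpleGraph V) (r : V → ℝ) (p : List V) : Prop :=
  p.Chain' G.Adj ∧ p.Nodup ∧
  (∀ (h : p ≠ []), ∀ v ∈ p, r (p.head h) ≤ r v) ∧
  (∀ i j : ℕ, ∀ (hi : i + 1 < p.length) (hj : j < p.length), i + 1 ≤ j →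
    G.Adj (p[i]'(by omega)) (p[j]'hj) → r (p[i+1]'hi) ≤ r (p[j]'hj))

/-- `u` occurs strictly before `w` on the list `p`. -/
def Before {V : Type*} (p : List V) (u w : V) : Prop :=
  ∃ q1 q2 q3 : List V, p = q1 ++ u :: q2 ++ w :: q3

theorem stmt2 {V : Type*} [Fintype V]
    (G : SimpleGraph V) (l r : V → ℝ)
    (hlr : ∀ v : V, l v < r v)
    (hinjl : Function.Injective l) (hinjr : Function.Injective r)
    (hlrne : ∀ u v : V, l u ≠ r v)
    (hadj : ∀ u v : V, G.Adj u v ↔ u ≠ v ∧ l u ≤ r v ∧ l v ≤ r u)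
    (p : List V) (hnp : IsNormalPath G r p)
    (u w : V) (hbefore : Before p u w)
    (hsigma : r w < r u) :
    G.Adj w u := by
  obtain ⟨hc, hnd, hh, hn⟩ := hnp
  obtain ⟨q1, q2, q3, hp⟩ := hbefore
  have hb : q1.length + 1 + q2.length < p.length := by
    rw [hp]; simp; omega
  have hw : p[q1.length + 1 + q2.length]'hb = w := by
    subst hp
    rw [List.getElem_append_right (by simp; omega)]
    simp [show q1.length + 1 + q2.length - (q1.length + (q2.length + 1)) = 0 by omega]
  have hu : p[q1.length]'(by omega) = u := by
    subst hp
    simp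
  have key : ∀ i : ℕ, ∀ hi : i ≤ q1.length, l (p[i]'(by omega)) ≤ r w := by
    intro i
    induction i with
    | zero =>
      intro _
      have hne : p ≠ [] := by rintro rfl; simp at hb
      have h1 := hh hne w (by rw [hp]; simp)
      rw [List.head_eq_getElem] at h1
      exact (hlr _).le.trans h1
    | succ i ih =>
      intro hi
      have h1 := ih (by omega)
      have hadj1 : G.Adj (p[i]'(by omega)) (p[i+1]'(by omega)) :=
        List.isChain_iff_getElem.mp hc i (by omega)
      by_cases h2 : r (p[i]'(by omega)) ≤ r w
      · exact ((hadj _ _).mp hadj1).2.2.trans h2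
      · push Not at h2
        have h3 : G.Adj (p[i]'(by omega)) w :=
          (hadj _ _).mpr ⟨fun h => by rw [h] at h2; exact lt_irrefl _ h2, h1,
            ((hlr w).trans h2).le⟩
        have h4 := hn i (q1.length + 1 + q2.length) (by omega) hb (by omega) (by rw [hw]; exact h3)
        rw [hw] at h4
        exact (hlr _).le.trans h4
  have h := key q1.length le_rfl
  rw [hu] at h
  exact (hadj _ _).mpr ⟨fun e => by rw [e] at hsigma; exact lt_irrefl _ hsigma,
    ((hlr w).trans hsigma).le, h⟩
end

section
/- Let G be an interval graph with interval representation I and right-endpoint ordering σ, and let P=(P_1,u,w,P_2) be a normal path of G in which w is the immediate successor of u. If w <_σ u, then I_w ⊆ I_u. -/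
theorem stmt3 {V : Type*} [Fintype V]
    (G : SimpleGraph V) (l r : V → ℝ)
    (hlr : ∀ v : V, l v < r v)
    (hinjl : Function.Injective l) (hinjr : Function.Injective r)
    (hlrne : ∀ u v : V, l u ≠ r v)
    (hadj : ∀ u v : V, G.Adj u v ↔ u ≠ v ∧ l u ≤ r v ∧ l v ≤ r u)
    (p1 p2 : List V) (u w : V)
    (hnp : IsNormalPath G r (p1 ++ u :: w :: p2))
    (hsigma : r w < r u) :
    Set.Icc (l w) (r w) ⊆ Set.Icc (l u) (r u) := by
  obtain ⟨hch, hnd, hhd, hnorm⟩ := hnp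
  have key : ∀ (p : List V) (k : ℕ) (hk : k + 1 < p.length), p.IsChain G.Adj → p.Nodup →
      (∀ (h : p ≠ []), ∀ v ∈ p, r (p.head h) ≤ r v) →
      (∀ i j : ℕ, ∀ (hi : i + 1 < p.length) (hj : j < p.length), i + 1 ≤ j →
        G.Adj (p[i]'(by omega)) (p[j]'hj) → r (p[i+1]'hi) ≤ r (p[j]'hj)) →
      ∀ i, ∀ hi : i ≤ k, r (p[i]'(by omega)) ≤ r (p[k+1]'hk) ∨
        l (p[i]'(by omega)) ≤ l (p[k+1]'hk) := by
    intro p k hk hch hnd hhd hnorm i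
    induction i with
    | zero =>
      intro _
      left
      have hne : p ≠ [] := by
        intro h
        simp [h] at hk
      have := hhd hne (p[k+1]) (List.getElem_mem hk)
      rwa [List.head_eq_getElem] at this
    | succ i ih =>
      intro hi
      have ih := ih (by omega)
      by_cases ha : G.Adj (p[i]'(by omega)) (p[k+1]'hk)
      · exact Or.inl (hnorm i (k+1) (by omega) hk (by omega) ha)
      · right
        have hne : (p[i]'(by omega)) ≠ (p[k+1]'hk) := by
          intro h
          have := (hnd.getElem_inj_iff).1 h
          omega
        have hnext := (hadj _ _).1 (List.isChain_iff_getElem.1 hch i (by omega))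
        have h1 := hlr (p[i]'(by omega))
        have h2 := hlr (p[k+1]'hk)
        by_contra hcon
        apply ha
        rw [hadj]
        refine ⟨hne, ?_, ?_⟩
        · rcases ih with h | h <;> linarith
        · linarith [hnext.2.2]
  have h := key (p1 ++ u :: w :: p2) p1.length (by simp) hch hnd hhd hnorm p1.length le_rfl
  have e1 : (p1 ++ u :: w :: p2)[p1.length]'(by simp) = u := by simp
  have e2 : (p1 ++ u :: w :: p2)[p1.length + 1]'(by simp) = w := by
    simp [List.getElem_append_right]
  rw [e1, e2] at h
  rcases h with h | h
  · linarith
  · exact Set.Icc_subset_Icc h hsigma.le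
end

section
/- Let G be an interval graph with interval representation I and right-endpoint ordering σ, and let S ⊆ V be a set such that I[S] is a proper interval representation of G[S]. Let P be a normal path of G and u,v ∈ S ∩ V(P). If u <_σ v, then u <_P v. -/
theorem stmt4 {V : Type*} [Fintype V]
    (G : SimpleGraph V) (l r : V → ℝ)
    (hlr : ∀ v : V, l v < r v)
    (hinjl : Function.Injective l) (hinjr : Function.Injective r)
    (hlrne : ∀ u v : V, l u ≠ r v)
    (hadj : ∀ u v : V, G.Adj u v ↔ u ≠ v ∧ l u ≤ r v ∧ l v ≤ r u)
    (S : Set V)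
    (hSproper : ∀ x ∈ S, ∀ y ∈ S, x ≠ y →
      ¬ Set.Icc (l x) (r x) ⊆ Set.Icc (l y) (r y))
    (p : List V) (hnp : IsNormalPath G r p)
    (u v : V) (huS : u ∈ S) (hvS : v ∈ S) (hup : u ∈ p) (hvp : v ∈ p)
    (hsigma : r u < r v) :
    Before p u v := by
  obtain ⟨hch, hnd, hhead, hmin⟩ := hnp
  have hluv : l u < l v := by
    by_contra hcon
    refine hSproper u huS v hvS (by rintro rfl; exact lt_irrefl _ hsigma) ?_
    exact Set.Icc_subset_Icc (not_lt.mp hcon) hsigma.le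
  obtain ⟨b, hb, hbu⟩ := List.getElem_of_mem hup
  obtain ⟨a, ha, hav⟩ := List.getElem_of_mem hvp
  have hadjc : ∀ i (h : i + 1 < p.length), G.Adj (p[i]'(by omega)) (p[i+1]'h) := by
    intro i h
    exact List.isChain_iff_getElem.mp hch i h
  rcases lt_trichotomy b a with hlt | heq | hgt
  · refine ⟨p.take b, (p.drop (b+1)).take (a - (b+1)), p.drop (a+1), ?_⟩
    have h1 : p = p.take b ++ p.drop b := (List.take_append_drop b p).symm
    have h2 : p.drop b = u :: p.drop (b+1) := by
      rw [List.drop_eq_getElem_cons hb, hbu]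
    have h3 : p.drop (b+1) = (p.drop (b+1)).take (a - (b+1)) ++ p.drop a := by
      conv_lhs => rw [← List.take_append_drop (a - (b+1)) (p.drop (b+1))]
      rw [List.drop_drop]
      congr 2
      omega
    have h4 : p.drop a = v :: p.drop (a+1) := by
      rw [List.drop_eq_getElem_cons ha, hav]
    rw [← h4, List.append_assoc, List.cons_append, ← h3, ← h2, ← h1]
  · subst heq
    rw [hbu] at hav
    subst hav
    exact absurd hsigma (lt_irrefl _)
  · exfalso
    have hne : p ≠ [] := List.ne_nil_of_mem hup
    have h0 := hhead hne u hup
    rw [List.head_eq_getElem] at h0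
    have hneu : ∀ i (h : i < p.length), i < b → p[i] ≠ u := by
      intro i h hib he
      rw [← hbu] at he
      have := (hnd.getElem_inj_iff).mp he
      omega
    have key : ∀ i (h : i < p.length), i < a → l p[i] ≤ r u := by
      intro i
      induction i with
      | zero => intro h _; exact (hlr _).le.trans h0
      | succ i ih =>
        intro h hia
        by_contra hcon
        have hi := ih (by omega) (by omega)
        have h1 := ((hadj _ _).mp (hadjc i h)).2.2
        have h2 := hmin i b h hb (by omega) (by
          rw [hbu]
          refine (hadj _ _).mpr ⟨hneu i _ (by omega), hi, ?_⟩
          linarith [hlr u])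
        rw [hbu] at h2
        linarith [hlr (p[i+1])]
    cases a with
    | zero => rw [hav] at h0; linarith
    | succ c =>
      have h1 := ((hadj _ _).mp (hadjc c ha)).2.2
      rw [hav] at h1
      have h2 := hmin c b ha hb (by omega) (by
        rw [hbu]
        refine (hadj _ _).mpr ⟨hneu c _ (by omega), key c _ (by omega), ?_⟩
        linarith)
      rw [hbu, hav] at h2
      linarith
end

section
/- Let G be an interval graph with interval representation I and right-endpoint ordering σ, and let P=(P_1,u,u′,P_2) be a normal path of G in which u′ is the immediate successor of u. Then every vertex v ∈ V(P_2) satisfies u <_σ v or u′ <_σ v. -/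
theorem stmt5_aux {V : Type*}
    (G : SimpleGraph V) (l r : V → ℝ)
    (hlr : ∀ v : V, l v < r v)
    (hadj : ∀ u v : V, G.Adj u v ↔ u ≠ v ∧ l u ≤ r v ∧ l v ≤ r u)
    (p : List V) (hnp : IsNormalPath G r p) (j : ℕ) (hj : j < p.length) (m : ℕ)
    (hm : m + 1 < j) (h1 : r (p[j]'hj) < r (p[m]'(by omega)))
    (h2 : r (p[j]'hj) < r (p[m+1]'(by omega))) : False := by
  obtain ⟨hc, -, hh, hn⟩ := hnp
  induction m with
  | zero =>
    have hne : p ≠ [] := by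
      rintro rfl
      simp at hj
    have := hh hne (p[j]'hj) (List.getElem_mem hj)
    rw [List.head_eq_getElem] at this
    linarith
  | succ m ih =>
    rcases lt_or_ge (r (p[j]'hj)) (r (p[m]'(by omega))) with h | h
    · exact ih (by omega) h h1
    · have ha : G.Adj (p[m]'(by omega)) (p[m+1]'(by omega)) :=
        List.isChain_iff_getElem.mp hc m (by omega)
      have hb := ((hadj _ _).mp ha).2.2
      have hc' : G.Adj (p[m+1]'(by omega)) (p[j]'hj) := by
        refine (hadj _ _).mpr ⟨?_, by linarith, by linarith [hlr (p[j]'hj)]⟩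
        intro he
        rw [he] at h1
        exact lt_irrefl _ h1
      have := hn (m+1) j (by omega) hj (by omega) hc'
      linarith

theorem stmt5 {V : Type*} [Fintype V]
    (G : SimpleGraph V) (l r : V → ℝ)
    (hlr : ∀ v : V, l v < r v)
    (hinjl : Function.Injective l) (hinjr : Function.Injective r)
    (hlrne : ∀ u v : V, l u ≠ r v)
    (hadj : ∀ u v : V, G.Adj u v ↔ u ≠ v ∧ l u ≤ r v ∧ l v ≤ r u)
    (p1 p2 : List V) (u u' : V)
    (hnp : IsNormalPath G r (p1 ++ u :: u' :: p2)) :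
    ∀ v ∈ p2, r u < r v ∨ r u' < r v := by
  intro v hv
  by_contra hcon
  push Not at hcon
  obtain ⟨h1, h2⟩ := hcon
  obtain ⟨k, hk, rfl⟩ := List.getElem_of_mem hv
  have hnd := hnp.2.1
  have hnd2 : (u :: u' :: p2).Nodup := (List.nodup_append.mp hnd).2.1
  have hu : p2[k] ≠ u := by
    intro he
    rw [he] at hv
    simp [hv] at hnd2
  have hu' : p2[k] ≠ u' := by
    intro he
    rw [he] at hv
    simp [hv] at hnd2
  have h1' := lt_of_le_of_ne h1 (fun h => hu (hinjr h))
  have h2' := lt_of_le_of_ne h2 (fun h => hu' (hinjr h))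
  have hl : p1.length + (k + 2) < (p1 ++ u :: u' :: p2).length := by
    simp; omega
  refine stmt5_aux G l r hlr hadj _ hnp (p1.length + (k + 2)) hl p1.length (by omega) ?_ ?_
  · simpa [List.getElem_append_right] using h1'
  · simpa [List.getElem_append_right] using h2'
end

section
/- Let G be an interval graph with interval representation I and right-endpoint ordering σ, and let P=(P_1,u,v,w,P_2) be a normal path of G in which u,v,w are consecutive vertices. If v <_σ u, then v <_σ w. -/
theorem stmt6 {V : Type*} [Fintype V]
    (G : SimpleGraph V) (l r : V → ℝ)
    (hlr : ∀ v : V, l v < r v)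
    (hinjl : Function.Injective l) (hinjr : Function.Injective r)
    (hlrne : ∀ u v : V, l u ≠ r v)
    (hadj : ∀ u v : V, G.Adj u v ↔ u ≠ v ∧ l u ≤ r v ∧ l v ≤ r u)
    (p1 p2 : List V) (u v w : V)
    (hnp : IsNormalPath G r (p1 ++ u :: v :: w :: p2))
    (hsigma : r v < r u) :
    r v < r w := by
  obtain ⟨hc, hnd, hhead, hnorm⟩ := hnp
  have hvw : v ≠ w := by
    rintro rfl
    simp [List.nodup_append] at hnd
  have huw : u ≠ w := by
    rintro rfl
    simp [List.nodup_append] at hnd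
  by_contra hcon
  have hwv : r w ≤ r v := not_lt.mp hcon
  have hlt : r w < r v := lt_of_le_of_ne hwv (fun h => hvw (hinjr h).symm)
  generalize hp : p1 ++ u :: v :: w :: p2 = p at *
  have hlen : p1.length + 2 < p.length := by simp [← hp]
  have hu : p[p1.length]'(by omega) = u := by simp [← hp]
  have hv : p[p1.length + 1]'(by omega) = v := by simp [← hp]
  have hw : p[p1.length + 2]'(by omega) = w := by simp [← hp]
  have key : ∀ i : ℕ, ∀ hi : i ≤ p1.length, l (p[i]'(by omega)) ≤ r w := by
    intro i
    induction i with
    | zero =>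
      intro _
      have hne : p ≠ [] := by simp [← hp]
      have h1 := hhead hne w (by simp [← hp])
      rw [List.head_eq_getElem] at h1
      exact (hlr _).le.trans h1
    | succ i ih =>
      intro hi
      have h1 := ih (by omega)
      have hstep : G.Adj (p[i]'(by omega)) (p[i+1]'(by omega)) :=
        List.isChain_iff_getElem.mp hc i (by omega)
      rcases le_or_gt (r w) (r (p[i]'(by omega))) with h | h
      · have hne : p[i]'(by omega) ≠ w := by
          intro he
          rw [← hw] at he
          have := (hnd.getElem_inj_iff).mp he
          omega
        have h2 := hnorm i (p1.length + 2) (by omega) (by omega) (by omega)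
          (by rw [hw]; exact (hadj _ _).mpr ⟨hne, h1, (hlr w).le.trans h⟩)
        rw [hw] at h2
        exact (hlr _).le.trans h2
      · exact ((hadj _ _).mp hstep).2.2.trans h.le
  have h1 := key p1.length le_rfl
  rw [hu] at h1
  have h2 := hnorm p1.length (p1.length + 2) (by omega) (by omega) (by omega)
    (by rw [hw, hu]; exact (hadj _ _).mpr ⟨huw, h1, by linarith [hlr w]⟩)
  rw [hw, hv] at h2
  linarith
end

section
/- Let G be an interval graph with interval representation I and right-endpoint ordering σ, and let P=(P_1,u,w,P_2,v,P_3) be a normal path of G in which w is the immediate successor of u and v ∈ N(u). If u <_σ w, then u <_σ x <_σ v for every vertex x ∈ V(P_2) ∪ {w}. -/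
theorem core_aux {V : Type*}
    (G : SimpleGraph V) (l r : V → ℝ)
    (hlr : ∀ v : V, l v < r v)
    (hinjr : Function.Injective r)
    (hadj : ∀ u v : V, G.Adj u v ↔ u ≠ v ∧ l u ≤ r v ∧ l v ≤ r u)
    (f : ℕ → V) (N n m : ℕ)
    (hch : ∀ i, i + 1 < N → G.Adj (f i) (f (i+1)))
    (hne : ∀ i j, i < j → j < N → f i ≠ f j)
    (hhead : ∀ i, i < N → r (f 0) ≤ r (f i))
    (hnorm : ∀ i j, i + 1 < N → j < N → i + 1 ≤ j → G.Adj (f i) (f j) → r (f (i+1)) ≤ r (f j))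
    (hnm : n + 1 < m) (hm : m < N) (huv : G.Adj (f n) (f m))
    (hs : r (f n) < r (f (n+1))) :
    ∀ d, n + 1 + d < m → r (f n) < r (f (n+1+d)) ∧ r (f (n+1+d)) < r (f m) := by
  intro d
  have hneR : ∀ i j, i < j → j < N → r (f i) ≠ r (f j) :=
    fun i j h1 h2 h => hne i j h1 h2 (hinjr h)
  induction d with
  | zero =>
    intro h
    exact ⟨hs, lt_of_le_of_ne (hnorm n m (by omega) hm (by omega) huv) (hneR _ _ h hm)⟩
  | succ d ih =>
    intro h
    obtain ⟨h1, h2⟩ := ih (by omega)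
    have huv' := (hadj _ _).1 huv
    have hlm := hlr (f m)
    have had : G.Adj (f (n+1+d)) (f m) := by
      rw [hadj]
      have := hlr (f (n+1+d))
      exact ⟨hne _ _ (by omega) hm, by linarith, by linarith⟩
    refine ⟨?_, lt_of_le_of_ne (hnorm (n+1+d) m (by omega) hm (by omega) had)
      (hneR _ _ h hm)⟩
    change r (f n) < r (f (n+1+d+1))
    by_contra hcon
    have hlt : r (f (n+1+d+1)) < r (f n) :=
      lt_of_le_of_ne (not_lt.1 hcon) (hneR n _ (by omega) (by omega)).symm
    have hxl : r (f (n+1+d+1)) < l (f n) := by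
      by_contra hc
      have : G.Adj (f n) (f (n+1+d+1)) := by
        rw [hadj]
        have := hlr (f (n+1+d+1))
        exact ⟨hne _ _ (by omega) (by omega), by linarith, by linarith⟩
      have := hnorm n (n+1+d+1) (by omega) (by omega) (by omega) this
      linarith
    have key : ∀ k, k ≤ n → r (f (n+1+d+1)) < l (f (n-k)) := by
      intro k
      induction k with
      | zero => intro _; simpa using hxl
      | succ k ihk =>
        intro hk
        have hb := ihk (by omega)
        have e : n - k = n - (k+1) + 1 := by omega
        rw [e] at hb
        generalize hi : n - (k+1) = i at hb ⊢
        have ha := (hadj _ _).1 (hch i (by omega))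
        have hlb := hlr (f (i+1))
        by_contra hc
        have : G.Adj (f i) (f (n+1+d+1)) := by
          rw [hadj]
          have := hlr (f (n+1+d+1))
          exact ⟨hne _ _ (by omega) (by omega), by linarith, by linarith⟩
        have := hnorm i (n+1+d+1) (by omega) (by omega) (by omega) this
        linarith
    have h0 := key n le_rfl
    rw [Nat.sub_self] at h0
    have := hhead (n+1+d+1) (by omega)
    have := hlr (f 0)
    linarith

theorem stmt7 {V : Type*} [Fintype V]
    (G : SimpleGraph V) (l r : V → ℝ)
    (hlr : ∀ v : V, l v < r v)
    (hinjl : Function.Injective l) (hinjr : Function.Injective r)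
    (hlrne : ∀ u v : V, l u ≠ r v)
    (hadj : ∀ u v : V, G.Adj u v ↔ u ≠ v ∧ l u ≤ r v ∧ l v ≤ r u)
    (p1 p2 p3 : List V) (u w v : V)
    (hnp : IsNormalPath G r (p1 ++ u :: w :: (p2 ++ v :: p3)))
    (huv : G.Adj u v)
    (hsigma : r u < r w) :
    ∀ x ∈ w :: p2, r u < r x ∧ r x < r v := by
  obtain ⟨hch, hnd, hhd, hno⟩ := hnp
  set p := p1 ++ u :: w :: (p2 ++ v :: p3) with hp
  have hlen : p.length = p1.length + (p2.length + (p3.length + 1) + 1 + 1) := by simp [hp]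
  have hf : ∀ i (h : i < p.length), p.getD i u = p[i] := fun i h => by simp [h]
  have e0 : p.getD p1.length u = u := by simp [hp]
  have e1 : p.getD (p1.length + 1) u = w := by simp [hp]
  have e2 : ∀ j (hj : j < p2.length), p.getD (p1.length + 1 + (j + 1)) u = p2[j] := by
    intro j hj
    rw [hp, show p1.length + 1 + (j+1) = p1.length + (j + 2) by omega]
    simp [List.getElem?_append, hj]
  have e3 : p.getD (p1.length + (p2.length + 2)) u = v := by
    simp [hp, List.getElem?_append]
  have main := core_aux G l r hlr hinjr hadj (fun i => p.getD i u) p.length p1.length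
    (p1.length + (p2.length + 2))
    (by
      intro i hi
      simp only [hf i (by omega), hf (i+1) hi]
      exact List.isChain_iff_getElem.1 hch i hi)
    (by
      intro i j hij hj
      simp only [hf i (by omega), hf j hj]
      intro h
      have := (hnd.getElem_inj_iff).1 h
      omega)
    (by
      intro i hi
      simp only [hf i hi, hf 0 (by omega)]
      have := hhd (by simp [hp]) p[i] (List.getElem_mem hi)
      rwa [List.head_eq_getElem] at this)
    (by
      intro i j hi hj hij
      simp only [hf i (by omega), hf j hj, hf (i+1) hi]
      exact hno i j hi hj hij)
    (by omega) (by omega)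
    (by simp only [e0, e3]; exact huv)
    (by simp only [e0, e1]; exact hsigma)
  simp only [e0, e3] at main
  intro x hx
  rcases List.mem_cons.1 hx with rfl | hx
  · have := main 0 (by omega)
    rwa [Nat.add_zero, e1] at this
  · obtain ⟨j, hj, rfl⟩ := List.mem_iff_getElem.1 hx
    have := main (j+1) (by omega)
    rwa [e2 j hj] at this
end

section
/- Let G be a weighted interval graph with interval representation I and weight function w : V → ℕ, let S be a reducible set in G, and let P be a path of maximum weight in G with S ⊆ V(P). Then there exists a path P′ of G such that V(P′) = V(P) and the vertices of S appear consecutively in P′ (i.e., the vertices of S form a contiguous subpath of P′). -/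
/-- Left endpoint of `span(S)`. -/
noncomputable def spanL {V : Type*} (l : V → ℝ) (S : Set V) : ℝ := sInf (l '' S)

/-- Right endpoint of `span(S)`. -/
noncomputable def spanR {V : Type*} (r : V → ℝ) (S : Set V) : ℝ := sSup (r '' S)

/-- `S` is a reducible set of the interval graph `G` with representation `I_v = [l v, r v]`:
the representation restricted to `S` is proper, `G[S]` is connected, and every vertex whose
interval lies inside `span(S)` belongs to `S`. -/
def Reducible {V : Type*} (G : SimpleGraph V) (l r : V → ℝ) (S : Set V) : Prop :=
  (∀ u ∈ S, ∀ v ∈ S, u ≠ v → ¬ Set.Icc (l u) (r u) ⊆ Set.Icc (l v) (r v)) ∧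
  (G.induce S).Connected ∧
  (∀ v : V, Set.Icc (l v) (r v) ⊆ Set.Icc (spanL l S) (spanR r S) → v ∈ S)

namespace Stmt9Aux

variable {V : Type*}

/-- Intersection of intervals. -/
def R (l r : V → ℝ) (a b : V) : Prop := l a ≤ r b ∧ l b ≤ r a

theorem R.symm {l r : V → ℝ} {a b : V} (h : R l r a b) : R l r b a := ⟨h.2, h.1⟩

/-- `v :: p` is a normal (greedy) path. -/
def Nrm (l r : V → ℝ) : V → List V → Prop
  | _, [] => True
  | v, b :: q => R l r v b ∧ (∀ x ∈ q, R l r v x → r b ≤ r x) ∧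
      (∀ x ∈ b :: q, l v ≤ r x) ∧ Nrm l r b q

theorem Nrm.chain {l r : V → ℝ} : ∀ {v : V} {p : List V}, Nrm l r v p →
    List.IsChain (R l r) (v :: p)
  | _, [], _ => by simp
  | _, _ :: _, h => List.isChain_cons_cons.2 ⟨h.1, Nrm.chain h.2.2.2⟩

theorem Nrm.pw {l r : V → ℝ} : ∀ {v : V} {p : List V}, Nrm l r v p →
    List.Pairwise (fun a x => l a ≤ r x) (v :: p)
  | _, [], _ => by simp
  | _, _ :: _, h => List.pairwise_cons.2 ⟨h.2.2.1, Nrm.pw h.2.2.2⟩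

theorem Nrm.greedy {l r : V → ℝ} : ∀ {v : V} {p : List V}, Nrm l r v p →
    ∀ (X : List V) (z b : V) (Y : List V), v :: p = X ++ z :: b :: Y →
      ∀ x ∈ Y, R l r z x → r b ≤ r x
  | _, [], _, X, z, b, Y, e => by
      have := congrArg List.length e
      simp at this
      omega
  | v, c :: q, h, [], z, b, Y, e => by
      simp at e
      obtain ⟨rfl, rfl, rfl⟩ := e
      exact h.2.1
  | v, c :: q, h, a :: X, z, b, Y, e => by
      simp only [List.cons_append, List.cons.injEq] at e
      exact Nrm.greedy h.2.2.2 X z b Y e.2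

/-- Order property of normal paths. -/
theorem Nrm.ord_aux {l r : V → ℝ} : ∀ {v : V} {p : List V}, Nrm l r v p →
    List.Pairwise (fun a x => l x ≤ l a → r a ≤ r x) p
  | _, [], _ => by simp
  | v, b :: q, h => List.pairwise_cons.2 ⟨fun x hx hl =>
      h.2.1 x hx ⟨h.2.2.1 x (List.mem_cons_of_mem _ hx), hl.trans h.1.2⟩, Nrm.ord_aux h.2.2.2⟩

theorem merge_aux {l r : V → ℝ} (hlr : ∀ v, l v ≤ r v) (n : ℕ) :
    ∀ (c : V) (C : List V) (d : V) (D : List V), C.length + D.length ≤ n →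
    List.IsChain (R l r) (c :: C) → List.IsChain (R l r) (d :: D) →
    List.Pairwise (fun a x => l a ≤ r x) (c :: C) →
    List.Pairwise (fun a x => l a ≤ r x) (d :: D) →
    (∀ x ∈ c :: C ++ d :: D, l c ≤ r x ∧ l d ≤ r x) →
    ∃ e q, (e = c ∨ e = d) ∧ (e :: q).Perm (c :: C ++ d :: D) ∧
      List.IsChain (R l r) (e :: q) := by
  induction n with
  | zero =>
    intro c C d D hn h1 h2 h3 h4 h5
    have hC : C = [] := List.eq_nil_of_length_eq_zero (by omega)
    subst hC
    refine ⟨c, d :: D, Or.inl rfl, by simp, List.isChain_cons_cons.2 ⟨?_, h2⟩⟩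
    exact ⟨(h5 d (by simp)).1, (h5 c (by simp)).2⟩
  | succ n ih =>
    intro c C d D hn h1 h2 h3 h4 h5
    have hcd : R l r c d := ⟨(h5 d (by simp)).1, (h5 c (by simp)).2⟩
    have key : ∀ (c c2 : V) (C : List V) (d d2 : V) (D : List V),
        (c2 :: C).length + (d2 :: D).length ≤ n + 1 →
        List.IsChain (R l r) (c :: c2 :: C) → List.IsChain (R l r) (d :: d2 :: D) →
        List.Pairwise (fun a x => l a ≤ r x) (c :: c2 :: C) →
        List.Pairwise (fun a x => l a ≤ r x) (d :: d2 :: D) →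
        (∀ x ∈ c :: c2 :: C ++ d :: d2 :: D, l c ≤ r x ∧ l d ≤ r x) →
        R l r c d → l c2 ≤ l d2 →
        ∃ e q, (e = c ∨ e = d) ∧ (e :: q).Perm (c :: c2 :: C ++ d :: d2 :: D) ∧
          List.IsChain (R l r) (e :: q) := by
      intro c c2 C d d2 D hn h1 h2 h3 h4 h5 hcd hle
      rw [List.isChain_cons_cons] at h1
      have h2' := List.isChain_cons_cons.1 h2
      rw [List.pairwise_cons] at h3
      have h3' := List.pairwise_cons.1 h3.2
      have h4' := List.pairwise_cons.1 (List.pairwise_cons.1 h4).2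
      obtain ⟨e, q, he, hq, hch⟩ := ih c2 C d (d2 :: D) (by simp at hn ⊢; omega) h1.2 h2 h3.2 h4 (by
        intro x hx
        refine ⟨?_, (h5 x (by simp at hx ⊢; tauto)).2⟩
        simp only [List.cons_append, List.mem_cons, List.mem_append] at hx
        rcases hx with rfl | hx | rfl | rfl | hx
        · exact hlr _
        · exact h3'.1 x hx
        · exact hle.trans h2'.1.2
        · exact hle.trans (hlr _)
        · exact hle.trans (h4'.1 x hx))
      refine ⟨c, e :: q, Or.inl rfl, by simpa using hq, List.isChain_cons_cons.2 ⟨?_, hch⟩⟩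
      rcases he with rfl | rfl
      · exact h1.1
      · exact hcd
    cases C with
    | nil => exact ⟨c, d :: D, Or.inl rfl, by simp, List.isChain_cons_cons.2 ⟨hcd, h2⟩⟩
    | cons c2 C =>
      cases D with
      | nil =>
        exact ⟨d, c :: c2 :: C, Or.inr rfl, (List.perm_append_comm (l₁ := [d])),
          List.isChain_cons_cons.2 ⟨hcd.symm, h1⟩⟩
      | cons d2 D =>
        rcases le_total (l c2) (l d2) with h | h
        · exact key c c2 C d d2 D hn h1 h2 h3 h4 h5 hcd h
        · obtain ⟨e, q, he, hq, hch⟩ := key d d2 D c c2 C (by omega) h2 h1 h4 h3 (by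
            intro x hx
            exact (h5 x (by simp at hx ⊢; tauto)).symm) hcd.symm h
          exact ⟨e, q, he.symm, hq.trans List.perm_append_comm, hch⟩

theorem front {l r : V → ℝ} (hlr : ∀ v, l v ≤ r v) (Y : List V) (u : V) (C : List V)
    (ih : ∀ (v : V) (p : List V), p.length < (Y ++ u :: C).length →
      List.IsChain (R l r) (v :: p) → (∀ x ∈ p, l v ≤ r x) → ∃ p', p'.Perm p ∧ Nrm l r v p')
    (hch : List.IsChain (R l r) (Y ++ u :: C)) (hmin : ∀ x ∈ Y ++ u :: C, r u ≤ r x) :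
    ∃ q, q.Perm (Y ++ C) ∧ List.IsChain (R l r) (u :: q) := by
  have hC : List.IsChain (R l r) (u :: C) := hch.right_of_append
  have hY : List.IsChain (R l r) (u :: Y.reverse) := by
    have h : List.IsChain (R l r) (Y ++ [u]) := by
      have : Y ++ u :: C = (Y ++ [u]) ++ C := by simp
      rw [this] at hch
      exact hch.left_of_append
    have h2 := List.isChain_reverse.2 (h.imp fun _ _ h => h.symm)
    simpa using h2
  by_cases hYn : Y = []
  · subst hYn; exact ⟨C, by simp, hC⟩
  by_cases hCn : C = []
  · subst hCn; exact ⟨Y.reverse, by simp [List.reverse_perm], hY⟩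
  have hu : ∀ x ∈ Y ++ u :: C, l u ≤ r x := fun x hx => (hlr u).trans (hmin x hx)
  obtain ⟨D, hD, hDn⟩ := ih u Y.reverse (by simp) hY
    (fun x hx => hu x (by simp at hx ⊢; tauto))
  obtain ⟨E, hE, hEn⟩ := ih u C (by simp; omega) hC (fun x hx => hu x (by simp; tauto))
  have hD' : D.Perm Y := hD.trans Y.reverse_perm
  cases D with
  | nil => exact absurd hD'.nil_eq.symm hYn
  | cons d D =>
    cases E with
    | nil => exact absurd hE.nil_eq.symm hCn
    | cons e E =>
      obtain ⟨f, q, hf, hq, hqc⟩ := merge_aux hlr _ d D e E le_rfl hDn.2.2.2.chain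
        hEn.2.2.2.chain hDn.2.2.2.pw hEn.2.2.2.pw (by
          intro x hx
          have hx' : r u ≤ r x := hmin x (by
            have := (hD'.append hE).mem_iff.1 hx
            simp at this ⊢; tauto)
          exact ⟨hDn.1.2.trans hx', hEn.1.2.trans hx'⟩)
      refine ⟨f :: q, hq.trans (hD'.append hE), List.isChain_cons_cons.2 ⟨?_, hqc⟩⟩
      rcases hf with rfl | rfl
      · exact hDn.1
      · exact hEn.1

theorem exists_min (f : V → ℝ) (P : V → Prop) (p : List V) (h : ∃ x ∈ p, P x) :
    ∃ u ∈ p, P u ∧ ∀ x ∈ p, P x → f u ≤ f x := by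
  have hfin : {x | x ∈ p ∧ P x}.Finite := (List.finite_toSet p).subset fun x hx => hx.1
  obtain ⟨u, hu, hmin⟩ := Set.exists_min_image _ f hfin (by
    obtain ⟨x, hx, hP⟩ := h; exact ⟨x, hx, hP⟩)
  exact ⟨u, hu.1, hu.2, fun x hx hP => hmin x ⟨hx, hP⟩⟩

theorem exists_normal {l r : V → ℝ} (hlr : ∀ v, l v ≤ r v) (n : ℕ) :
    ∀ (v : V) (p : List V), p.length < n →
      List.IsChain (R l r) (v :: p) → (∀ x ∈ p, l v ≤ r x) → ∃ p', p'.Perm p ∧ Nrm l r v p' := by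
  induction n with
  | zero => intro v p h; omega
  | succ n ih =>
    intro v p hn hch hinv
    cases p with
    | nil => exact ⟨[], by simp, trivial⟩
    | cons y1 p1 =>
    have hvy : R l r v y1 := (List.isChain_cons_cons.1 hch).1
    obtain ⟨u, hup, hvu, hmin⟩ := exists_min r (R l r v) (y1 :: p1) ⟨y1, by simp, hvy⟩
    have hch1 := (List.isChain_cons_cons.1 hch).2
    have huinv : ∀ x ∈ y1 :: p1, l u ≤ r x := by
      intro x hx
      by_contra hc
      push Not at hc
      have := hmin x hx ⟨hinv x hx, (hlr x).trans (hc.le.trans hvu.2)⟩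
      linarith [hlr u]
    -- it suffices to bring u to the front
    suffices hs : ∃ q, (u :: q).Perm (y1 :: p1) ∧ List.IsChain (R l r) (u :: q) by
      obtain ⟨q, hq, hqc⟩ := hs
      obtain ⟨q', hq', hqn⟩ := ih u q (by have := hq.length_eq; simp at this hn; omega) hqc
        (fun x hx => huinv x (hq.mem_iff.1 (List.mem_cons_of_mem _ hx)))
      have hperm : (u :: q').Perm (y1 :: p1) := (hq'.cons u).trans hq
      refine ⟨u :: q', hperm, hvu, ?_, ?_, hqn⟩
      · intro x hx hR
        exact hmin x (hperm.mem_iff.1 (List.mem_cons_of_mem _ hx)) hR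
      · intro x hx
        exact hinv x (hperm.mem_iff.1 hx)
    obtain ⟨Y, C, hYC⟩ := List.append_of_mem hup
    by_cases hall : ∀ x ∈ y1 :: p1, r u ≤ r x
    · rw [hYC] at hch1 hall hn
      obtain ⟨q, hq, hqc⟩ := front hlr Y u C (fun v p hp => ih v p (by omega)) hch1 hall
      refine ⟨q, ?_, hqc⟩
      rw [hYC]
      exact (hq.cons u).trans List.perm_middle.symm
    · cases Y with
      | nil =>
        simp at hYC
        obtain ⟨rfl, rfl⟩ := hYC
        exact ⟨p1, List.Perm.refl _, hch1⟩
      | cons y Y =>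
        simp only [List.cons_append, List.cons.injEq] at hYC
        obtain ⟨rfl, rfl⟩ := hYC
        have hrev : List.IsChain (R l r) (u :: (y1 :: Y).reverse) := by
          have h : List.IsChain (R l r) ((y1 :: Y) ++ [u]) := by
            have : y1 :: (Y ++ u :: C) = ((y1 :: Y) ++ [u]) ++ C := by simp
            rw [this] at hch1
            exact hch1.left_of_append
          have h2 := List.isChain_reverse.2 (h.imp fun _ _ h => h.symm)
          simpa using h2
        have hC : List.IsChain (R l r) (u :: C) := by
          rw [← List.cons_append] at hch1
          exact hch1.right_of_append
        refine ⟨(y1 :: Y).reverse ++ C, ?_, ?_⟩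
        · have h1 : ((y1 :: Y).reverse ++ C).Perm ((y1 :: Y) ++ C) :=
            (List.reverse_perm _).append_right C
          exact (h1.cons u).trans (List.perm_middle (l₁ := y1 :: Y)).symm
        · rw [← List.cons_append, List.isChain_append]
          refine ⟨hrev, hC.tail, ?_⟩
          intro x hx c hc
          have hxy : x = y1 := by
            have e : u :: (y1 :: Y).reverse = (u :: Y.reverse) ++ [y1] := by simp
            rw [e, List.getLast?_append] at hx
            simpa using hx.symm
          subst hxy
          cases C with
          | nil => simp at hc
          | cons c1 C =>
            simp at hc
            subst hc
            have huc := (List.isChain_cons_cons.1 hC).1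
            have hc1 : c1 ∈ x :: (Y ++ u :: c1 :: C) := by simp
            have hrx : r u ≤ r x := hmin x (by simp) hvy
            refine ⟨?_, huc.2.trans hrx⟩
            by_contra hcc
            push Not at hcc
            apply hall
            have hcv : R l r v c1 := ⟨hinv c1 hc1, (hlr c1).trans (hcc.le.trans hvy.2)⟩
            have h1 := hmin c1 hc1 hcv
            have h2 := hvy.2
            intro z hz
            by_cases hvz : R l r v z
            · exact hmin z hz hvz
            · have : ¬ l z ≤ r v := fun h => hvz ⟨hinv z hz, h⟩
              have := hlr z
              linarith

theorem exists_normal' {l r : V → ℝ} (hlr : ∀ v, l v ≤ r v) (p : List V) (hp : p ≠ [])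
    (hch : List.IsChain (R l r) p) :
    ∃ u q, (u :: q).Perm p ∧ Nrm l r u q ∧
      List.Pairwise (fun a x => l x ≤ l a → r a ≤ r x) (u :: q) := by
  obtain ⟨u, hup, -, hmin⟩ := exists_min r (fun _ => True) p
    (by obtain ⟨x, hx⟩ := List.exists_mem_of_ne_nil p hp; exact ⟨x, hx, trivial⟩)
  obtain ⟨Y, C, rfl⟩ := List.append_of_mem hup
  obtain ⟨q, hq, hqc⟩ := front hlr Y u C (fun v p _ => exists_normal hlr _ v p (Nat.lt_succ_self _))
    hch (fun x hx => hmin x hx trivial)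
  have hq1 : (u :: q).Perm (Y ++ u :: C) := (hq.cons u).trans List.perm_middle.symm
  obtain ⟨q', hq', hn⟩ := exists_normal hlr _ u q (Nat.lt_succ_self _) hqc
    (fun x hx => (hlr u).trans (hmin x (hq1.mem_iff.1 (List.mem_cons_of_mem _ hx)) trivial))
  have hq2 := (hq'.cons u).trans hq1
  exact ⟨u, q', hq2, hn, List.pairwise_cons.2 ⟨fun x hx _ =>
    hmin x (hq2.mem_iff.1 (List.mem_cons_of_mem _ hx)) trivial, hn.ord_aux⟩⟩

theorem isChain_of_splits {α : Type*} {Q : α → α → Prop} : ∀ (L : List α),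
    (∀ X a b Y, L = X ++ a :: b :: Y → Q a b) → List.IsChain Q L
  | [], _ => by simp
  | [_], _ => by simp
  | a :: b :: L, h => List.isChain_cons_cons.2 ⟨h [] a b L rfl,
      isChain_of_splits (b :: L) fun X c d Y e => h (a :: X) c d Y (by simp [e])⟩

theorem core {l r : V → ℝ} (hlr : ∀ v, l v ≤ r v) (S : Set V)
    (hprop : ∀ u ∈ S, ∀ v ∈ S, u ≠ v → ¬ (l v ≤ l u ∧ r u ≤ r v))
    (hconn : ∀ T : Set V, (∃ s ∈ S, s ∈ T) → (∃ s ∈ S, s ∉ T) →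
      ∃ s ∈ S, ∃ s' ∈ S, s ∈ T ∧ s' ∉ T ∧ R l r s s')
    (a z : V) (ha : a ∈ S) (hz : z ∈ S) (hamin : ∀ s ∈ S, l a ≤ l s) (hzmax : ∀ s ∈ S, r s ≤ r z)
    (hin : ∀ v, l a ≤ l v → r v ≤ r z → v ∈ S)
    (p : List V) (hnd : p.Nodup) (hch : List.IsChain (R l r) p) (hSp : ∀ s ∈ S, s ∈ p) :
    ∃ q1 q2 q3 : List V, (q1 ++ q2 ++ q3).Perm p ∧ List.IsChain (R l r) (q1 ++ q2 ++ q3) ∧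
      {x | x ∈ q2} = S := by
  classical
  obtain ⟨u, q, hperm, hnrm, hord⟩ := exists_normal' hlr p
    (List.ne_nil_of_mem (hSp a ha)) hch
  have hLch := hnrm.chain
  have hLpw := hnrm.pw
  have hLg := hnrm.greedy
  have hLnd : (u :: q).Nodup := hperm.nodup_iff.2 hnd
  have hLS : ∀ s ∈ S, s ∈ u :: q := fun s hs => hperm.mem_iff.2 (hSp s hs)
  generalize u :: q = L at *
  -- vertices of S are in order
  have hSord : L.Pairwise (fun x y => x ∈ S → y ∈ S → l x < l y ∧ r x < r y) := by
    refine (hord.and hLnd).imp ?_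
    rintro x y ⟨h, hne⟩ hx hy
    have h1 : l x < l y := by
      by_contra hc
      push Not at hc
      exact hprop x hx y hy hne ⟨hc, h hc⟩
    refine ⟨h1, ?_⟩
    by_contra hc
    push Not at hc
    exact hprop y hy x hx hne.symm ⟨h1.le, hc⟩
  -- key claim
  have key : ∀ (n : ℕ) (X : List V) (b : V) (Y : List V), X.length = n → L = X ++ b :: Y → a ∈ X →
      z ∈ Y → b ∉ S → l b < l a := by
    intro n
    induction n with
    | zero =>
      intro X b Y hX _ haX
      rw [List.eq_nil_of_length_eq_zero hX] at haX
      simp at haX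
    | succ n ih =>
      intro X b Y hX hL haX hzY hb
      by_contra hlb
      push Not at hlb
      have hrb : r z < r b := by
        by_contra hc
        push Not at hc
        exact hb (hin b hlb hc)
      obtain ⟨X', w, rfl⟩ : ∃ X' w, X = X' ++ [w] := by
        rcases List.eq_nil_or_concat X with h | ⟨X', w, h⟩
        · rw [h] at haX; simp at haX
        · exact ⟨X', w, by simpa using h⟩
      have hw : w ∈ S ∨ l w < l a := by
        by_cases hwS : w ∈ S
        · exact Or.inl hwS
        · right
          refine ih X' w (b :: Y) (by simpa using hX) (by simpa using hL) ?_ (by simp [hzY]) hwS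
          simp at haX
          rcases haX with h | h
          · exact h
          · subst h; exact absurd ha hwS
      have hcross : ∀ x ∈ X' ++ [w], ∀ y ∈ b :: Y, x ≠ y := by
        rw [hL] at hLnd
        exact (List.pairwise_append.1 hLnd).2.2
      obtain ⟨s, hs, s', hs', hsX, hsX', hR⟩ := hconn {x | x ∈ X' ++ [w]} ⟨a, ha, haX⟩
        ⟨z, hz, fun h => hcross z h z (by simp [hzY]) rfl⟩
      have hs'Y : s' ∈ Y := by
        have h := hLS s' hs'
        rw [hL, List.mem_append] at h
        rcases h with h | h
        · exact absurd h hsX'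
        · rcases List.mem_cons.1 h with h | h
          · subst h; exact absurd hs' hb
          · exact h
      have hrs : r s ≤ r w := by
        have hsX2 : s ∈ X' ∨ s = w := by simpa using hsX
        rcases hsX2 with h | h
        · have hL2 : L = X' ++ w :: b :: Y := by simpa using hL
          rw [hL2] at hSord hord
          rcases hw with hw | hw
          · exact ((List.pairwise_append.1 hSord).2.2 s h w (by simp) hs hw).2.le
          · exact (List.pairwise_append.1 hord).2.2 s h w (by simp) (hw.le.trans (hamin s hs))
        · rw [h]
      have hlw : l w ≤ r s' := by
        rw [hL] at hLpw
        exact (List.pairwise_append.1 hLpw).2.2 w (by simp) s' (by simp [hs'Y])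
      have := hLg X' w b Y (by simpa using hL) s' hs'Y ⟨hlw, hR.2.trans hrs⟩
      have := hzmax s' hs'
      linarith
  obtain ⟨A, M', hA⟩ := List.append_of_mem (hLS a ha)
  have hAS : ∀ x ∈ A, x ∉ S := by
    intro x hx hxS
    rw [hA] at hSord
    have := ((List.pairwise_append.1 hSord).2.2 x hx a (by simp) hxS ha).1
    linarith [hamin x hxS]
  have hzM : z ∈ a :: M' := by
    have h := hLS z hz
    rw [hA, List.mem_append] at h
    rcases h with h | h
    · exact absurd hz (hAS z h)
    · exact h
  obtain ⟨M2, C, hM⟩ := List.append_of_mem hzM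
  have hCS : ∀ x ∈ C, x ∉ S := by
    intro x hx hxS
    rw [hA, hM] at hSord
    have h1 := (List.pairwise_append.1 (List.pairwise_append.1 hSord).2.1).2.1
    have := ((List.pairwise_cons.1 h1).1 x hx hz hxS).2
    linarith [hzmax x hxS]
  cases M2 with
  | nil =>
    simp only [List.nil_append, List.cons.injEq] at hM
    obtain ⟨rfl, rfl⟩ := hM
    refine ⟨A, [a], M', by simpa [← hA] using hperm, by simpa [← hA] using hLch, ?_⟩
    ext x
    simp only [List.mem_singleton, Set.mem_ofPred_eq]
    constructor
    · rintro rfl; exact ha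
    · intro hx
      have h := hLS x hx
      rw [hA] at h
      simp only [List.mem_append, List.mem_cons] at h
      rcases h with h | h | h
      · exact absurd hx (hAS x h)
      · exact h
      · exact absurd hx (hCS x h)
  | cons a' M =>
    simp only [List.cons_append, List.cons.injEq] at hM
    obtain ⟨rfl, rfl⟩ := hM
    set F := M.filter (fun x => ¬ x ∈ S) with hF
    set G := M.filter (fun x => x ∈ S) with hG
    have hMperm : (F ++ G).Perm M := by
      have := List.filter_append_perm (fun x => decide (x ∈ S)) M
      refine List.Perm.trans List.perm_append_comm ?_
      simpa [hF, hG] using this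
    have hFa : ∀ x ∈ F, l x < l a ∧ r a ≤ r x := by
      intro x hx
      simp only [hF, List.mem_filter, decide_eq_true_eq] at hx
      obtain ⟨hxM, hxS⟩ := hx
      obtain ⟨M1, M2, rfl⟩ := List.append_of_mem hxM
      have h1 := key _ (A ++ a :: M1) x (M2 ++ z :: C) rfl (by simp [hA]) (by simp) (by simp) hxS
      refine ⟨h1, ?_⟩
      rw [hA] at hord
      exact (List.pairwise_cons.1 (List.pairwise_append.1 hord).2.1).1 x (by simp) h1.le
    have hset : {x | x ∈ a :: G ++ [z]} = S := by
      ext x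
      simp only [Set.mem_ofPred_eq, List.cons_append, List.mem_cons, List.mem_append,
        List.not_mem_nil, or_false, hG, List.mem_filter, decide_eq_true_eq]
      constructor
      · rintro (rfl | h | rfl)
        · exact ha
        · exact h.2
        · exact hz
      · intro hx
        have h := hLS x hx
        rw [hA] at h
        simp only [List.mem_append, List.mem_cons] at h
        rcases h with h | h | h | h | h
        · exact absurd hx (hAS x h)
        · exact Or.inl h
        · exact Or.inr (Or.inl ⟨h, hx⟩)
        · exact Or.inr (Or.inr h)
        · exact absurd hx (hCS x h)
    have hmemS : ∀ x, x ∈ a :: G ++ [z] ↔ x ∈ S := fun x => by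
      rw [← hset]; rfl
    have hsub : (a :: G ++ [z]).Sublist L := by
      rw [hA]
      have h1 : (a :: G ++ [z]).Sublist (a :: M ++ z :: C) :=
        ((List.filter_sublist (l := M)).cons_cons a).append
          (List.singleton_sublist.2 (by simp))
      exact h1.trans (List.sublist_append_right A _)
    have hQord := hSord.sublist hsub
    have hQnd := hLnd.sublist hsub
    have hSch : List.IsChain (R l r) (a :: G ++ [z]) := by
      apply isChain_of_splits
      intro X b c Y e
      rw [e] at hQord hQnd hmemS
      have e2 : X ++ b :: c :: Y = (X ++ [b]) ++ c :: Y := by simp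
      rw [e2] at hQnd
      have hcross := (List.pairwise_append.1 hQnd).2.2
      have hbS : b ∈ S := (hmemS b).1 (by simp)
      have hcS : c ∈ S := (hmemS c).1 (by simp)
      obtain ⟨s, hs, s', hs', hsX, hsX', hR⟩ := hconn {x | x ∈ X ++ [b]}
        ⟨b, hbS, by simp⟩ ⟨c, hcS, fun h => hcross c h c (by simp) rfl⟩
      have hs'Y : s' ∈ c :: Y := by
        have h := (hmemS s').2 hs'
        rw [e2, List.mem_append] at h
        exact h.resolve_left hsX'
      have hp1 := List.pairwise_append.1 hQord
      have hp2 := List.pairwise_cons.1 hp1.2.1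
      have hp3 := List.pairwise_cons.1 hp2.2
      have h1 : r s ≤ r b := by
        have h : s ∈ X ∨ s = b := by simpa using hsX
        rcases h with h | h
        · exact (hp1.2.2 s h b (by simp) hs hbS).2.le
        · rw [h]
      have h2 : l c ≤ l s' := by
        rcases List.mem_cons.1 hs'Y with h | h
        · rw [h]
        · exact (hp3.1 s' h hcS hs').1.le
      have h3 := (hp2.1 c (by simp) hbS hcS).1
      exact ⟨h3.le.trans (hlr c), h2.trans (hR.2.trans h1)⟩
    refine ⟨A ++ F, a :: G ++ [z], C, ?_, ?_, hset⟩
    · refine List.Perm.trans ?_ hperm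
      rw [hA]
      have h0 : A ++ F ++ (a :: G ++ [z]) ++ C = A ++ (F ++ a :: (G ++ z :: C)) := by simp
      rw [h0]
      refine List.Perm.append_left A (List.perm_middle.trans (List.Perm.cons a ?_))
      rw [← List.append_assoc]
      exact hMperm.append_right _
    · have hzC : List.IsChain (R l r) ([z] ++ C) := by
        have : L = (A ++ a :: M) ++ ([z] ++ C) := by simp [hA]
        rw [this] at hLch
        exact hLch.right_of_append
      have h1 : List.IsChain (R l r) (a :: G ++ [z] ++ C) :=
        hSch.append_overlap hzC (by simp)
      rw [List.append_assoc, List.append_assoc A, ]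
      rw [hA] at hLch
      have hA3 := List.isChain_append.1 hLch
      have hFch : List.IsChain (R l r) F := by
        apply isChain_of_splits
        intro X b c Y e
        have hb := hFa b (by simp [e])
        have hc := hFa c (by simp [e])
        have := hlr a
        constructor <;> linarith [hb.1, hb.2, hc.1, hc.2]
      have hlast : ∀ x ∈ A.getLast?, R l r x a := fun x hx => hA3.2.2 x hx a (by simp)
      rw [List.isChain_append, List.isChain_append]
      refine ⟨hA3.1, ⟨hFch, by simpa using h1, ?_⟩, ?_⟩
      · intro x hx y hy
        have hy' : y = a := by simpa using hy.symm
        subst hy'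
        have hx' := hFa x (List.mem_of_mem_getLast? hx)
        have := hlr y
        constructor <;> linarith [hx'.1, hx'.2]
      · intro x hx y hy
        have hxa := hlast x hx
        cases hFc : F with
        | nil =>
          rw [hFc] at hy
          have hy' : y = a := by simpa using hy.symm
          rw [hy']; exact hxa
        | cons f F' =>
          rw [hFc] at hy
          have hy' : y = f := by simpa using hy.symm
          have hf := hFa f (by simp [hFc])
          rw [hy']
          exact ⟨hxa.1.trans hf.2, hf.1.le.trans hxa.2⟩

end Stmt9Aux

theorem stmt9 {V : Type*} [Fintype V]
    (G : SimpleGraph V) (l r : V → ℝ)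
    (hlr : ∀ v : V, l v < r v)
    (hinjl : Function.Injective l) (hinjr : Function.Injective r)
    (hlrne : ∀ u v : V, l u ≠ r v)
    (hadj : ∀ u v : V, G.Adj u v ↔ u ≠ v ∧ l u ≤ r v ∧ l v ≤ r u)
    (w : V → ℕ) (S : Set V) (hS : Reducible G l r S)
    (p : List V) (hp : p.Chain' G.Adj) (hnd : p.Nodup)
    (hmax : ∀ q : List V, q.Chain' G.Adj → q.Nodup → (q.map w).sum ≤ (p.map w).sum)
    (hSP : S ⊆ {x : V | x ∈ p}) :
    ∃ p' : List V, p'.Chain' G.Adj ∧ p'.Nodup ∧ (∀ x : V, x ∈ p' ↔ x ∈ p) ∧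
      ∃ q1 q2 q3 : List V, p' = q1 ++ q2 ++ q3 ∧ {x : V | x ∈ q2} = S := by
  obtain ⟨hprop, hconn, hspan⟩ := hS
  have hne : S.Nonempty := by
    obtain ⟨x⟩ := hconn.nonempty
    exact ⟨x.1, x.2⟩
  obtain ⟨a, ha, hamin⟩ := Set.exists_min_image S l S.toFinite hne
  obtain ⟨z, hz, hzmax⟩ := Set.exists_max_image S r S.toFinite hne
  have hL : spanL l S = l a := by
    apply IsLeast.csInf_eq
    exact ⟨⟨a, ha, rfl⟩, by rintro _ ⟨x, hx, rfl⟩; exact hamin x hx⟩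
  have hR : spanR r S = r z := by
    apply IsGreatest.csSup_eq
    exact ⟨⟨z, hz, rfl⟩, by rintro _ ⟨x, hx, rfl⟩; exact hzmax x hx⟩
  obtain ⟨q1, q2, q3, hperm, hch, hset⟩ := Stmt9Aux.core (l := l) (r := r)
    (fun v => (hlr v).le) S
    (fun u hu v hv huv h => hprop u hu v hv huv (Set.Icc_subset_Icc h.1 h.2))
    (by
      rintro T ⟨s, hs, hsT⟩ ⟨s', hs', hsT'⟩
      obtain ⟨W⟩ := hconn.preconnected ⟨s, hs⟩ ⟨s', hs'⟩
      obtain ⟨d, -, h1, h2⟩ := W.exists_boundary_dart {x | x.1 ∈ T} hsT hsT'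
      refine ⟨d.fst.1, d.fst.2, d.snd.1, d.snd.2, h1, h2, ?_⟩
      exact ((hadj _ _).1 d.adj).2)
    a z ha hz hamin hzmax
    (fun v h1 h2 => hspan v (by rw [hL, hR]; exact Set.Icc_subset_Icc h1 h2))
    p hnd (List.IsChain.imp (fun x y h => ((hadj x y).1 h).2) hp) (fun s hs => hSP hs)
  have hnd' := hperm.nodup_iff.2 hnd
  refine ⟨q1 ++ q2 ++ q3, ?_, hnd', fun x => hperm.mem_iff, q1, q2, q3, rfl, hset⟩
  generalize q1 ++ q2 ++ q3 = L at hch hnd'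
  refine Stmt9Aux.isChain_of_splits L ?_
  rintro X x y Y rfl
  have h1 := (List.isChain_cons_cons.1 hch.right_of_append).1
  have h2 := (List.pairwise_cons.1 (List.pairwise_append.1 hnd').2.1).1 y (by simp)
  exact (hadj x y).2 ⟨h2, h1⟩
end

section
/- Let k be a positive integer and let G be a finite simple graph such that 1 ≤ deg(v) ≤ 2(k−1) for every vertex v of G. Then |V(G)| ≤ (2k−1)·mm(G) and |E(G)| ≤ (2k−1)·mm(G). -/
/-- `M` is a matching of `G`: a finite set of edges of `G` that are pairwise
vertex-disjoint. -/
def IsMatchingSet {V : Type*} (G : SimpleGraph V) (M : Finset (Sym2 V)) : Prop :=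
  (∀ e ∈ M, e ∈ G.edgeSet) ∧
  (∀ e ∈ M, ∀ f ∈ M, e ≠ f → ∀ v : V, ¬ (v ∈ e ∧ v ∈ f))

open Finset in
theorem aux_cov_card {V : Type*} [Fintype V] [DecidableEq V] (G : SimpleGraph V)
    (M : Finset (Sym2 V)) (hM : IsMatchingSet G M) :
    (M.biUnion Sym2.toFinset).card = 2 * M.card := by
  rw [Finset.card_biUnion]
  · rw [Finset.sum_congr rfl (g := fun _ => 2)]
    · simp [mul_comm]
    · intro e he
      exact Sym2.card_toFinset_of_not_isDiag e (G.not_isDiag_of_mem_edgeSet (hM.1 e he))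
  · intro e he f hf hne
    rw [Function.onFun, Finset.disjoint_left]
    intro v hv hv'
    rw [Sym2.mem_toFinset] at hv hv'
    exact hM.2 e he f hf hne v ⟨hv, hv'⟩

theorem aux_insert {V : Type*} [DecidableEq V] (G : SimpleGraph V)
    (N : Finset (Sym2 V)) (hN : IsMatchingSet G N) (x y : V) (hxy : G.Adj x y)
    (hx : ∀ e ∈ N, x ∉ e) (hy : ∀ e ∈ N, y ∉ e) :
    IsMatchingSet G (insert s(x, y) N) ∧ (insert s(x, y) N).card = N.card + 1 := by
  have hnot : s(x, y) ∉ N := fun h => hx _ h (Sym2.mem_mk_left x y)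
  refine ⟨⟨?_, ?_⟩, Finset.card_insert_of_notMem hnot⟩
  · intro e he
    rcases Finset.mem_insert.1 he with rfl | he
    · exact hxy
    · exact hN.1 e he
  · intro e he f hf hne v hv
    rcases Finset.mem_insert.1 he with rfl | he2
    · rcases Finset.mem_insert.1 hf with rfl | hf2
      · exact hne rfl
      · rcases Sym2.mem_iff.1 hv.1 with rfl | rfl
        · exact hx f hf2 hv.2
        · exact hy f hf2 hv.2
    · rcases Finset.mem_insert.1 hf with rfl | hf2
      · rcases Sym2.mem_iff.1 hv.2 with rfl | rfl
        · exact hx e he2 hv.1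
        · exact hy e he2 hv.1
      · exact hN.2 e he2 f hf2 hne v hv

theorem aux_sub {V : Type*} (G : SimpleGraph V)
    (N N' : Finset (Sym2 V)) (hN : IsMatchingSet G N) (h : N' ⊆ N) : IsMatchingSet G N' :=
  ⟨fun e he => hN.1 e (h he), fun e he f hf => hN.2 e (h he) f (h hf)⟩

/-- `u` and `v` are never both missed by a matching of size `m`. -/
def NoMiss {V : Type*} (G : SimpleGraph V) (m : ℕ) (u v : V) : Prop :=
  ∀ M : Finset (Sym2 V), IsMatchingSet G M → M.card = m →
    ¬ ((∀ e ∈ M, u ∉ e) ∧ (∀ e ∈ M, v ∉ e))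

theorem aux_trans {V : Type*} [Fintype V] [DecidableEq V] (G : SimpleGraph V) (m : ℕ)
    (hmax : ∀ M : Finset (Sym2 V), IsMatchingSet G M → M.card ≤ m)
    (w : V) (hw : ∃ M : Finset (Sym2 V), IsMatchingSet G M ∧ M.card = m ∧ ∀ e ∈ M, w ∉ e)
    (u v : V) (huv : u ≠ v) (h1 : NoMiss G m u w) (h2 : NoMiss G m w v) : NoMiss G m u v := by
  classical
  intro M hM hMc ⟨hMu, hMv⟩
  obtain ⟨N0, hN0⟩ := hw
  obtain ⟨N, hN, hNmax⟩ := Finset.exists_max_image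
    (Finset.univ.filter (fun N : Finset (Sym2 V) =>
      IsMatchingSet G N ∧ N.card = m ∧ ∀ e ∈ N, w ∉ e)) (fun N => (M ∩ N).card)
    ⟨N0, by simpa using hN0⟩
  simp only [Finset.mem_filter, Finset.mem_univ, true_and] at hN hNmax
  obtain ⟨hNm, hNc, hNw⟩ := hN
  have cM := aux_cov_card G M hM
  have cN := aux_cov_card G N hNm
  set A := M.biUnion Sym2.toFinset with hA
  set B := N.biUnion Sym2.toFinset with hB
  have memA : ∀ a, a ∈ A ↔ ∃ e ∈ M, a ∈ e := by intro a; simp [hA]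
  have memB : ∀ a, a ∈ B ↔ ∃ e ∈ N, a ∈ e := by intro a; simp [hB]
  have huB : u ∈ B := by
    rw [memB]; by_contra hc; push Not at hc
    exact h1 N hNm hNc ⟨hc, hNw⟩
  have hvB : v ∈ B := by
    rw [memB]; by_contra hc; push Not at hc
    exact h2 N hNm hNc ⟨hNw, hc⟩
  have huA : u ∉ A := by
    rw [memA]; push Not; exact hMu
  have hvA : v ∉ A := by
    rw [memA]; push Not; exact hMv
  have hBA : 1 < (B \ A).card :=
    Finset.one_lt_card.2 ⟨u, by simp [huB, huA], v, by simp [hvB, hvA], huv⟩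
  have hAB : 1 < (A \ B).card := by
    have e1 := Finset.card_sdiff_add_card_inter A B
    have e2 := Finset.card_sdiff_add_card_inter B A
    rw [Finset.inter_comm] at e2
    omega
  obtain ⟨x, hx, hxw⟩ := Finset.exists_mem_ne hAB w
  rw [Finset.mem_sdiff, memA, memB] at hx
  obtain ⟨⟨e, heM, hxe⟩, hxN⟩ := hx
  push Not at hxN
  obtain ⟨y, rfl⟩ := Sym2.mem_iff_exists.1 hxe
  have hadj : G.Adj x y := hM.1 _ heM
  have hy : ∃ f ∈ N, y ∈ f := by
    by_contra hc; push Not at hc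
    have := aux_insert G N hNm x y hadj hxN hc
    have := hmax _ this.1
    omega
  obtain ⟨f, hfN, hyf⟩ := hy
  have hyN : ∀ e ∈ N.erase f, y ∉ e := by
    intro e he hye
    rw [Finset.mem_erase] at he
    exact hNm.2 e he.2 f hfN he.1 y ⟨hye, hyf⟩
  have hxN' : ∀ e ∈ N.erase f, x ∉ e := fun e he => hxN e (Finset.mem_of_mem_erase he)
  obtain ⟨k1, k2⟩ := aux_insert G (N.erase f) (aux_sub G N _ hNm (Finset.erase_subset _ _)) x y
    hadj hxN' hyN
  rw [Finset.card_erase_add_one hfN] at k2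
  have hwy : w ≠ y := by
    rintro rfl; exact hNw f hfN hyf
  have hle := hNmax (insert s(x, y) (N.erase f)) ⟨k1, by omega, by
    intro e he hwe
    rcases Finset.mem_insert.1 he with rfl | he
    · rcases Sym2.mem_iff.1 hwe with h | h
      · exact hxw h.symm
      · exact hwy h
    · exact hNw e (Finset.mem_of_mem_erase he) hwe⟩
  have hxyN : s(x, y) ∉ N := fun h => hxN _ h hxe
  have hfM : f ∉ M := by
    intro h
    refine hM.2 f h _ heM ?_ y ⟨hyf, Sym2.mem_mk_right x y⟩
    rintro rfl; exact hxyN hfN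
  have hsub : insert s(x, y) (M ∩ N) ⊆ M ∩ insert s(x, y) (N.erase f) := by
    intro e he
    rcases Finset.mem_insert.1 he with rfl | he
    · simp [heM]
    · rw [Finset.mem_inter] at he
      have : e ≠ f := by rintro rfl; exact hfM he.1
      simp [he.1, he.2, this]
  have := Finset.card_le_card hsub
  rw [Finset.card_insert_of_notMem (by simp [hxyN])] at this
  omega

theorem aux_arith (d s t S : ℕ) (hs : s ≤ 2 * t + 1) (h1 : S ≤ s * d) (h2 : S ≤ s * (s - 1)) :
    S ≤ 2 * ((d + 1) * t) := by
  by_cases h : 2 * t ≤ d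
  · have : s * (s - 1) ≤ (2 * t + 1) * (2 * t) := Nat.mul_le_mul hs (by omega)
    nlinarith
  · have : s * d ≤ (2 * t + 1) * d := Nat.mul_le_mul hs le_rfl
    nlinarith

theorem aux_all {V : Type*} [Fintype V] [DecidableEq V] (G : SimpleGraph V)
    [DecidableRel G.Adj] (d m : ℕ) (hd : 2 ≤ d) (hdeg : ∀ v, G.degree v ≤ d)
    (hmax : ∀ M : Finset (Sym2 V), IsMatchingSet G M → M.card ≤ m)
    (hall : ∀ w, ∃ M : Finset (Sym2 V), IsMatchingSet G M ∧ M.card = m ∧ ∀ e ∈ M, w ∉ e) :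
    (∑ v, G.degree v) ≤ 2 * ((d + 1) * m) ∧
      (Finset.univ.filter (fun v => 0 < G.degree v)).card ≤ (d + 1) * m := by
  classical
  rcases isEmpty_or_nonempty V with hV | ⟨⟨w0⟩⟩
  · simp
  obtain ⟨M, hM, hMc, -⟩ := hall w0
  let S : Setoid V :=
    { r := fun u v => u = v ∨ NoMiss G m u v
      iseqv := by
        refine ⟨fun _ => Or.inl rfl, ?_, ?_⟩
        · rintro u v (h | h)
          · exact Or.inl h.symm
          · exact Or.inr fun N hN hc hh => h N hN hc hh.symm
        · rintro u v w (rfl | h) (rfl | h')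
          · exact Or.inl rfl
          · exact Or.inr h'
          · exact Or.inr h
          · by_cases huw : u = w
            · exact Or.inl huw
            · exact Or.inr (aux_trans G m hmax v (hall v) u w huw h h') }
  let q : V → Quotient S := fun v => Quotient.mk S v
  have qadj : ∀ u v, G.Adj u v → q u = q v := by
    intro u v huv
    refine Quotient.sound (Or.inr ?_)
    intro N hN hc hh
    have := aux_insert G N hN u v huv hh.1 hh.2
    have := hmax _ this.1
    omega
  have qeq : ∀ u v, q u = q v → u = v ∨ NoMiss G m u v := fun u v h => Quotient.exact h
  let f : Sym2 V → Quotient S := fun e => q e.out.1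
  have hf : ∀ e ∈ M, ∀ v ∈ e, q v = f e := by
    intro e he v hv
    have h1 : e.out.1 ∈ e := Sym2.out_fst_mem e
    by_cases h : v = e.out.1
    · simp only [f]; rw [← h]
    · apply qadj
      have := (Sym2.mem_and_mem_iff h).1 ⟨hv, h1⟩
      have h3 := hM.1 e he
      rw [this] at h3
      exact h3
  let C : Quotient S → Finset V := fun c => Finset.univ.filter (fun v => q v = c)
  let t : Quotient S → ℕ := fun c => (M.filter (fun e => f e = c)).card
  have ht : ∑ c, t c = m := by
    rw [← hMc]
    exact (Finset.card_eq_sum_card_fiberwise (f := f) (t := Finset.univ) (by simp)).symm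
  have hC : ∀ c, (C c).card ≤ 2 * t c + 1 := by
    intro c
    have h1 := aux_cov_card G _ (aux_sub G M (M.filter (fun e => f e = c)) hM
      (Finset.filter_subset _ _))
    have h2 : ((C c).filter (fun v => ∀ e ∈ M, v ∉ e)).card ≤ 1 := by
      rw [Finset.card_le_one]
      intro a ha b hb
      simp only [C, Finset.mem_filter, Finset.mem_univ, true_and] at ha hb
      rcases qeq a b (ha.1.trans hb.1.symm) with h | h
      · exact h
      · exact (h M hM hMc ⟨ha.2, hb.2⟩).elim
    have h3 : C c ⊆ (M.filter (fun e => f e = c)).biUnion Sym2.toFinset ∪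
        ((C c).filter (fun v => ∀ e ∈ M, v ∉ e)) := by
      intro v hv
      rw [Finset.mem_union]
      by_cases h : ∀ e ∈ M, v ∉ e
      · exact Or.inr (Finset.mem_filter.2 ⟨hv, h⟩)
      · push Not at h
        obtain ⟨e, he, hve⟩ := h
        left
        rw [Finset.mem_biUnion]
        refine ⟨e, Finset.mem_filter.2 ⟨he, ?_⟩, Sym2.mem_toFinset.2 hve⟩
        rw [← hf e he v hve]
        exact (Finset.mem_filter.1 hv).2
    have h4 := Finset.card_le_card h3
    have h5 := Finset.card_union_le ((M.filter (fun e => f e = c)).biUnion Sym2.toFinset)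
        ((C c).filter (fun v => ∀ e ∈ M, v ∉ e))
    simp only [t]
    omega
  have hdegC : ∀ c, ∀ v ∈ C c, G.degree v ≤ (C c).card - 1 := by
    intro c v hv
    rw [← Finset.card_erase_of_mem hv, ← G.card_neighborFinset_eq_degree]
    apply Finset.card_le_card
    intro u hu
    rw [SimpleGraph.mem_neighborFinset] at hu
    rw [Finset.mem_erase]
    refine ⟨hu.ne', Finset.mem_filter.2 ⟨Finset.mem_univ _, ?_⟩⟩
    rw [← qadj v u hu]
    exact (Finset.mem_filter.1 hv).2
  constructor
  · rw [← ht, Finset.mul_sum, Finset.mul_sum, ← Finset.sum_fiberwise Finset.univ q]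
    apply Finset.sum_le_sum
    intro c _
    apply aux_arith d (C c).card (t c) _ (hC c)
    · exact Finset.sum_le_card_nsmul _ _ _ (fun v _ => hdeg v)
    · exact Finset.sum_le_card_nsmul _ _ _ (hdegC c)
  · rw [← ht, Finset.mul_sum, Finset.card_eq_sum_card_fiberwise (f := q) (t := Finset.univ)
      (by simp)]
    apply Finset.sum_le_sum
    intro c _
    have hsub : (Finset.univ.filter (fun v => 0 < G.degree v)).filter (fun v => q v = c) ⊆ C c := by
      intro v hv
      exact Finset.mem_filter.2 ⟨Finset.mem_univ _, (Finset.mem_filter.1 hv).2⟩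
    have hle := Finset.card_le_card hsub
    have := hC c
    rcases Nat.eq_zero_or_pos (t c) with h0 | h0
    · rw [Nat.le_iff_lt_or_eq]
      right
      rw [h0, mul_zero, Finset.card_eq_zero, Finset.eq_empty_iff_forall_notMem]
      intro v hv
      have h1 := hdegC c v (hsub hv)
      have h2 := (Finset.mem_filter.1 (Finset.mem_filter.1 hv).1).2
      omega
    · nlinarith

theorem aux_main {V : Type*} [Fintype V] [DecidableEq V] (d : ℕ) (hd : 2 ≤ d) (m : ℕ) :
    ∀ (G : SimpleGraph V) [DecidableRel G.Adj], (∀ v, G.degree v ≤ d) →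
    (∀ M : Finset (Sym2 V), IsMatchingSet G M → M.card ≤ m) →
    G.edgeFinset.card ≤ (d + 1) * m ∧
      (Finset.univ.filter (fun v => 0 < G.degree v)).card ≤ (d + 1) * m := by
  induction m with
  | zero =>
    intro G _ hdeg hmax
    have := aux_all G d 0 hd hdeg hmax (fun w => ⟨∅, by simp [IsMatchingSet], by simp, by simp⟩)
    rw [G.sum_degrees_eq_twice_card_edges] at this
    exact ⟨by omega, this.2⟩
  | succ m ih =>
    intro G _ hdeg hmax
    by_cases hall : ∀ w, ∃ M : Finset (Sym2 V), IsMatchingSet G M ∧ M.card = m + 1 ∧ ∀ e ∈ M, w ∉ e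
    · have := aux_all G d (m + 1) hd hdeg hmax hall
      rw [G.sum_degrees_eq_twice_card_edges] at this
      exact ⟨by omega, this.2⟩
    · push Not at hall
      obtain ⟨w, hw⟩ := hall
      classical
      have hle := G.deleteIncidenceSet_le w
      obtain ⟨i1, i2⟩ := ih (G.deleteIncidenceSet w)
        (fun v => (SimpleGraph.degree_le_of_le hle).trans (hdeg v)) (by
          intro M hM
          have hMG : IsMatchingSet G M :=
            ⟨fun e he => SimpleGraph.edgeSet_mono hle (hM.1 e he), hM.2⟩
          have h1 := hmax M hMG
          by_contra hc
          obtain ⟨e, he, hwe⟩ := hw M hMG (by omega)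
          have h2 := hM.1 e he
          rw [SimpleGraph.edgeSet_deleteIncidenceSet] at h2
          exact h2.2 ⟨h2.1, hwe⟩)
      have hdw := hdeg w
      constructor
      · have := G.card_edgeFinset_deleteIncidenceSet w
        rw [mul_add, mul_one]
        omega
      · have hsub : (Finset.univ.filter (fun v => 0 < G.degree v)) ⊆
            (Finset.univ.filter (fun v => 0 < (G.deleteIncidenceSet w).degree v)) ∪
              insert w (G.neighborFinset w) := by
          intro v hv
          rw [Finset.mem_filter, SimpleGraph.degree_pos_iff_exists_adj] at hv
          obtain ⟨-, u, hu⟩ := hv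
          rw [Finset.mem_union, Finset.mem_insert, SimpleGraph.mem_neighborFinset,
            Finset.mem_filter, SimpleGraph.degree_pos_iff_exists_adj]
          by_cases hvw : v = w
          · exact Or.inr (Or.inl hvw)
          by_cases huw : u = w
          · subst huw; exact Or.inr (Or.inr hu.symm)
          · exact Or.inl ⟨Finset.mem_univ _, u,
              SimpleGraph.deleteIncidenceSet_adj.2 ⟨hu, hvw, huw⟩⟩
        have h1 := Finset.card_le_card hsub
        have h2 := Finset.card_union_le
          (Finset.univ.filter (fun v => 0 < (G.deleteIncidenceSet w).degree v))
          (insert w (G.neighborFinset w))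
        have h3 := Finset.card_insert_le w (G.neighborFinset w)
        rw [G.card_neighborFinset_eq_degree] at h3
        rw [mul_add, mul_one]
        omega

theorem stmt19 {V : Type*} [Fintype V] [DecidableEq V]
    (G : SimpleGraph V) [DecidableRel G.Adj]
    (k : ℕ) (hk : 0 < k)
    (hdeg : ∀ v : V, 1 ≤ G.degree v ∧ G.degree v ≤ 2 * (k - 1))
    (m : ℕ)
    (hm : IsGreatest {n : ℕ | ∃ M : Finset (Sym2 V), IsMatchingSet G M ∧ M.card = n} m) :
    Fintype.card V ≤ (2 * k - 1) * m ∧ G.edgeSet.ncard ≤ (2 * k - 1) * m := by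
  rcases Nat.lt_or_ge k 2 with hk2 | hk2
  · have : IsEmpty V := ⟨fun v => by have := hdeg v; omega⟩
    have h0 : G.edgeSet = ∅ := by
      ext e; induction e with | _ x y => exact isEmptyElim x
    simp [h0]
  · obtain ⟨h1, h2⟩ := aux_main (2 * (k - 1)) (by omega) m G (fun v => (hdeg v).2)
      (fun M hM => hm.2 ⟨M, hM, rfl⟩)
    have e : 2 * (k - 1) + 1 = 2 * k - 1 := by omega
    rw [e] at h1 h2
    constructor
    · rwa [Finset.filter_true_of_mem (p := fun v => 0 < G.degree v) (fun v _ => (hdeg v).1), Finset.card_univ] at h2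
    · rwa [← SimpleGraph.coe_edgeFinset, Set.ncard_coe_finset]
end
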